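/- Let X be a finite m-almost quasigroup quandle such that for each a ∈ X the stabilizer S_a is a trivial subquandle of X. For 1 ≤ j ≤ n define G_n^j : C_n^R(X) → C_{n+1}^R(X) on generators x = (x_1,…,x_n) by G_n^j(x) = Σ_{k=1}^m Σ_{y∈X} [ (x_j^{(k)},…,x_j^{(k)}, x_j, y, x_{j+1},…,x_n) − (x_j,…,x_j, x_j^{(k)}, y, x_{j+1},…,x_n) ], where in each tuple the first j−1 entries are equal (to x_j^{(k)} and x_j respectively). Then ∂_{n+1}∘G_n^j + G_{n−1}^j∘∂_n = (−1)^{j+1}(|X|−m)(g_1^j − g_0^j) as maps C_n^R(X) → C_n^R(X). -/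

import Mathlib

/-- The `n`-th rack chain group: the free abelian group on `n`-tuples of `X`. -/
abbrev RackChain (X : Type) (n : ℕ) : Type := FreeAbelianGroup (Fin n → X)

/-- The face map `d_i^{(*_0)}` deleting the `i`-th entry (0-indexed). -/
def dZero {X : Type} (n : ℕ) (i : Fin (n + 1)) (x : Fin (n + 1) → X) :
    Fin n → X :=
  fun j => if (j : ℕ) < (i : ℕ) then x j.castSucc else x j.succ

/-- The face map `d_i^{(*)}`: entries before position `i` are acted on by `x i`
and the `i`-th entry is deleted (0-indexed). -/
def dStar {X : Type} (op : X → X → X) (n : ℕ) (i : Fin (n + 1))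
    (x : Fin (n + 1) → X) : Fin n → X :=
  fun j => if (j : ℕ) < (i : ℕ) then op (x j.castSucc) (x i) else x j.succ

/-- The rack boundary `∂_{n+1} : C_{n+1}^R(X) → C_n^R(X)`,
`∂(x) = Σ_{i=1}^{n+1} (-1)^i (d_i^{(*_0)} x - d_i^{(*)} x)` (with `i` 1-based). -/
def rackBoundary {X : Type} (op : X → X → X) (n : ℕ) :
    RackChain X (n + 1) →+ RackChain X n :=
  FreeAbelianGroup.lift fun x =>
    ∑ i : Fin (n + 1), ((-1 : ℤ) ^ ((i : ℕ) + 1)) •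
      (FreeAbelianGroup.of (dZero n i x) - FreeAbelianGroup.of (dStar op n i x))

/-- The group of rack `(n+1)`-cycles. -/
def rackCycles {X : Type} (op : X → X → X) (n : ℕ) :
    AddSubgroup (RackChain X (n + 1)) :=
  (rackBoundary op n).ker

/-- The group of rack `(n+1)`-boundaries, viewed inside the cycles. -/
def rackBoundaries {X : Type} (op : X → X → X) (n : ℕ) :
    AddSubgroup (rackCycles op n) :=
  ((rackBoundary op (n + 1)).range).addSubgroupOf (rackCycles op n)

/-- The `(n+1)`-st rack homology group `H_{n+1}^R(X)` (so `n = 0` gives `H_1`). -/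
def rackHomology {X : Type} (op : X → X → X) (n : ℕ) : Type :=
  rackCycles (X := X) op n ⧸ rackBoundaries op n

instance {X : Type} (op : X → X → X) (n : ℕ) :
    AddCommGroup (rackHomology op n) :=
  QuotientAddGroup.Quotient.addCommGroup _
/-- The stabilizer `S_a = {x | a * x = a}` as a finset. -/
def stabF {X : Type} [Fintype X] [DecidableEq X] (op : X → X → X) (a : X) :
    Finset X :=
  Finset.univ.filter fun y => op a y = a

/-- The chain map `g_1^j` (`j` is 1-based, `1 ≤ j ≤ n`; zero otherwise):
`g_1^j(x) = Σ_{k ∈ S_{x_j}} (k, …, k, x_j, x_{j+1}, …, x_n)`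
(the first `j-1` entries equal `k`). -/
def g1map {X : Type} [Fintype X] [DecidableEq X] (op : X → X → X) (n j : ℕ) :
    RackChain X n →+ RackChain X n :=
  FreeAbelianGroup.lift fun x =>
    if h : 1 ≤ j ∧ j ≤ n then
      ∑ k ∈ stabF op (x ⟨j - 1, by omega⟩),
        FreeAbelianGroup.of (fun i : Fin n => if (i : ℕ) < j - 1 then k else x i)
    else 0

/-- The chain map `g_2^j` (`j` is 1-based, `1 ≤ j ≤ n`; zero otherwise):
`g_2^j(x) = Σ_{k ∈ S_{x_j}} (k, …, k, x_{j+1}, …, x_n)`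
(the first `j` entries equal `k`). -/
def g2map {X : Type} [Fintype X] [DecidableEq X] (op : X → X → X) (n j : ℕ) :
    RackChain X n →+ RackChain X n :=
  FreeAbelianGroup.lift fun x =>
    if h : 1 ≤ j ∧ j ≤ n then
      ∑ k ∈ stabF op (x ⟨j - 1, by omega⟩),
        FreeAbelianGroup.of (fun i : Fin n => if (i : ℕ) < j then k else x i)
    else 0

/-- The chain map `g_0^j` (`j` is 1-based, `1 ≤ j ≤ n`; zero otherwise):
`g_0^j(x) = Σ_{k ∈ S_{x_j}} (x_j, …, x_j, k, x_{j+1}, …, x_n)`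
(the first `j-1` entries equal `x_j`, the `j`-th entry is `k`). -/
def g0map {X : Type} [Fintype X] [DecidableEq X] (op : X → X → X) (n j : ℕ) :
    RackChain X n →+ RackChain X n :=
  FreeAbelianGroup.lift fun x =>
    if h : 1 ≤ j ∧ j ≤ n then
      ∑ k ∈ stabF op (x ⟨j - 1, by omega⟩),
        FreeAbelianGroup.of (fun i : Fin n =>
          if (i : ℕ) < j - 1 then x ⟨j - 1, by omega⟩
          else if (i : ℕ) = j - 1 then k else x i)
    else 0

/-- The symmetrizer chain map `g_s^j` (`j` is 1-based):
`g_s^j(x) = Σ_{y ∈ X} (y, …, y, x_{j+1}, …, x_n)` (the first `j` entries equal `y`). -/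
def gsmap {X : Type} [Fintype X] [DecidableEq X] (op : X → X → X) (n j : ℕ) :
    RackChain X n →+ RackChain X n :=
  FreeAbelianGroup.lift fun x =>
    ∑ y : X, FreeAbelianGroup.of (fun i : Fin n => if (i : ℕ) < j then y else x i)

/-- The chain homotopy `G_n^j` (`j` 1-based, `1 ≤ j ≤ n`; zero otherwise):
`G_n^j(x) = Σ_{k ∈ S_{x_j}} Σ_{y ∈ X} [(k, …, k, x_j, y, x_{j+1}, …, x_n)
− (x_j, …, x_j, k, y, x_{j+1}, …, x_n)]` (first `j-1` entries equal). -/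
def Gmap {X : Type} [Fintype X] [DecidableEq X] (op : X → X → X) (n j : ℕ) :
    RackChain X n →+ RackChain X (n + 1) :=
  FreeAbelianGroup.lift fun x =>
    if h : 1 ≤ j ∧ j ≤ n then
      ∑ k ∈ stabF op (x ⟨j - 1, by omega⟩), ∑ y : X,
        (FreeAbelianGroup.of (fun i : Fin (n + 1) =>
            if (i : ℕ) < j - 1 then k
            else if (i : ℕ) = j - 1 then x ⟨j - 1, by omega⟩
            else if (i : ℕ) = j then y
            else x ⟨(i : ℕ) - 1, by have := i.isLt; omega⟩)
         - FreeAbelianGroup.of (fun i : Fin (n + 1) =>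
            if (i : ℕ) < j - 1 then x ⟨j - 1, by omega⟩
            else if (i : ℕ) = j - 1 then k
            else if (i : ℕ) = j then y
            else x ⟨(i : ℕ) - 1, by have := i.isLt; omega⟩))
    else 0

/-!
Write `D = g_1^j - g_0^j`, and let `I : C_n → C_{n+1}` insert an entry after the `j`-th one, summed
over all of `X`, so that `G^j = I ∘ D`. Split the boundary as `∂ = ∑ i, ± δ_i` with
`δ_i = d_i^{(*_0)} - d_i^{(*)}`. Since `y ↦ y * c` is an automorphism of `X`, the maps `δ_i` commute
with `D`, and with `I` up to a shift of indices. Hence they cancel between `∂ ∘ G` and `G ∘ ∂`,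
except for the `δ` that deletes the inserted entry. That one sends `I (D x)` to
`|X| D x - ∑ y, D x * y`, where `*` acts on the first `j` entries. By the almost quasigroup property
the translates `x_j * y` hit `x_j` exactly `m` times and each element outside `S_{x_j}` once; since
`a * b = a` is an equivalence relation in `a` and `b`, the terms of the second kind cancel in pairs,
and `∑ y, D x * y = m D x`.
-/

open FreeAbelianGroup (of lift_apply_of)

section Tuples

variable {X : Type*}

/-- The tuple `x` with its entries of (0-indexed) position below `r` acted on by `c`. -/
def actBelow (op : X → X → X) {n : ℕ} (r : ℕ) (c : X) (x : Fin n → X) : Fin n → X :=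
  fun l => if (l : ℕ) < r then op (x l) c else x l

/-- The tuple `(a, …, a, b, x_{p+1}, …)` with `b` at the (0-indexed) position `p`. -/
def constPrefix {n : ℕ} (p : ℕ) (a b : X) (x : Fin n → X) : Fin n → X :=
  fun l => if (l : ℕ) < p then a else if (l : ℕ) = p then b else x l

theorem insertNth_constPrefix {n : ℕ} (p : Fin n) (a b y : X) (x : Fin n → X) :
    p.succ.insertNth y (constPrefix p a b x) =
      fun l : Fin (n + 1) => if (l : ℕ) < p then a else if (l : ℕ) = p then b
        else if (l : ℕ) = p + 1 then y
        else x ⟨l - 1, by have := p.pos; have := l.isLt; omega⟩ := by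
  refine Fin.insertNth_eq_iff.2 ⟨by simp, funext fun l => ?_⟩
  rcases le_or_gt l p with hlp | hpl
  · have hl : p.succ.succAbove l = l.castSucc :=
      Fin.succAbove_of_castSucc_lt _ _ (Fin.castSucc_lt_succ_iff.2 hlp)
    simp only [Fin.removeNth, hl, constPrefix, Fin.val_castSucc]
    split_ifs <;> first | rfl | omega
  · have hl : p.succ.succAbove l = l.succ :=
      Fin.succAbove_of_le_castSucc _ _ (Fin.succ_le_castSucc_iff.2 hpl)
    simp only [Fin.removeNth, hl, constPrefix, Fin.val_succ]
    split_ifs <;> first | rfl | omega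

theorem constPrefix_congr {n p : ℕ} (a b : X) {x x' : Fin n → X}
    (h : ∀ l : Fin n, p ≤ l → x l = x' l) : constPrefix p a b x = constPrefix p a b x' := by
  funext l
  unfold constPrefix
  split_ifs with hlt
  exacts [rfl, rfl, h l (not_lt.1 hlt)]

theorem actBelow_constPrefix (op : X → X → X) {n : ℕ} (p : ℕ) (a b c : X) (x : Fin n → X) :
    actBelow op (p + 1) c (constPrefix p a b x) = constPrefix p (op a c) (op b c) x := by
  funext l
  unfold actBelow constPrefix
  split_ifs <;> first | rfl | omega

end Tuples

section Faces

variable {X : Type}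

/-- The face difference `δ_i = d_i^{(*_0)} - d_i^{(*)}` on chains (0-indexed); the rack boundary is
the alternating sum of these. -/
def faceDiff (op : X → X → X) (n : ℕ) (i : Fin (n + 1)) : RackChain X (n + 1) →+ RackChain X n :=
  FreeAbelianGroup.lift fun x => of (dZero n i x) - of (dStar op n i x)

theorem faceDiff_of (op : X → X → X) {n : ℕ} (i : Fin (n + 1)) (x : Fin (n + 1) → X) :
    faceDiff op n i (of x) = of (dZero n i x) - of (dStar op n i x) :=
  lift_apply_of _ _

theorem rackBoundary_eq_sum_faceDiff (op : X → X → X) (n : ℕ) (c : RackChain X (n + 1)) :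
    rackBoundary op n c = ∑ i : Fin (n + 1), (-1 : ℤ) ^ ((i : ℕ) + 1) • faceDiff op n i c := by
  suffices h : rackBoundary op n = ∑ i : Fin (n + 1), (-1 : ℤ) ^ ((i : ℕ) + 1) • faceDiff op n i by
    simp only [h, AddMonoidHom.finsetSum_apply, AddMonoidHom.coe_smul, Pi.smul_apply]
  ext x
  simp only [rackBoundary, lift_apply_of, AddMonoidHom.finsetSum_apply, AddMonoidHom.coe_smul,
    Pi.smul_apply, faceDiff_of]

theorem dZero_apply {n : ℕ} (i : Fin (n + 1)) (x : Fin (n + 1) → X) (l : Fin n) :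
    dZero n i x l = x (i.succAbove l) :=
  (apply_ite x _ _ _).symm

theorem dStar_apply (op : X → X → X) {n : ℕ} (i : Fin (n + 1)) (x : Fin (n + 1) → X) (l : Fin n) :
    dStar op n i x l =
      if i.succAbove l < i then op (x (i.succAbove l)) (x i) else x (i.succAbove l) := by
  simp only [Fin.succAbove_lt_iff_castSucc_lt]
  simp only [dStar, Fin.succAbove, Fin.lt_def, Fin.val_castSucc]
  split_ifs <;> rfl

theorem dStar_eq_dZero {op : X → X → X} {n : ℕ} {i : Fin (n + 1)} {x : Fin (n + 1) → X}
    (h : ∀ l < i, op (x l) (x i) = x l) : dStar op n i x = dZero n i x := by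
  funext l
  rw [dStar_apply, dZero_apply]
  split_ifs with hl
  exacts [h _ hl, rfl]

theorem faceDiff_of_eq_zero {op : X → X → X} {n : ℕ} {i : Fin (n + 1)} {x : Fin (n + 1) → X}
    (h : ∀ l < i, op (x l) (x i) = x l) : faceDiff op n i (of x) = 0 := by
  rw [faceDiff_of, dStar_eq_dZero h, sub_self]

end Faces

section Insertion

variable {X : Type}

theorem dZero_insertNth_self {n : ℕ} (q : Fin (n + 1)) (y : X) (x : Fin n → X) :
    dZero n q (q.insertNth y x) = x := by
  funext l
  rw [dZero_apply, Fin.insertNth_apply_succAbove]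

theorem dStar_insertNth_self (op : X → X → X) {n : ℕ} (q : Fin (n + 1)) (y : X) (x : Fin n → X) :
    dStar op n q (q.insertNth y x) = actBelow op q y x := by
  funext l
  simp only [dStar_apply, Fin.insertNth_apply_succAbove, Fin.insertNth_apply_same,
    Fin.succAbove_lt_iff_castSucc_lt]
  rfl

theorem dZero_insertNth_succAbove {n : ℕ} (q : Fin (n + 2)) (i : Fin (n + 1)) (y : X)
    (x : Fin (n + 1) → X) :
    dZero (n + 1) (q.succAbove i) (q.insertNth y x) =
      (i.predAbove q).insertNth y (dZero n i x) := by
  refine Fin.eq_insertNth_iff.2 ⟨?_, funext fun l => ?_⟩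
  · rw [dZero_apply, Fin.succAbove_succAbove_predAbove, Fin.insertNth_apply_same]
  · rw [Fin.removeNth, dZero_apply, Fin.succAbove_succAbove_succAbove_predAbove,
      Fin.insertNth_apply_succAbove, dZero_apply]

theorem dStar_insertNth_succAbove (op : X → X → X) {n : ℕ} (q : Fin (n + 2)) (i : Fin (n + 1))
    (y : X) (x : Fin (n + 1) → X) :
    dStar op (n + 1) (q.succAbove i) (q.insertNth y x) =
      (i.predAbove q).insertNth (if q < q.succAbove i then op y (x i) else y) (dStar op n i x) := by
  refine Fin.eq_insertNth_iff.2 ⟨?_, funext fun l => ?_⟩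
  · rw [dStar_apply, Fin.succAbove_succAbove_predAbove, Fin.insertNth_apply_same,
      Fin.insertNth_apply_succAbove]
  · rw [Fin.removeNth, dStar_apply, Fin.succAbove_succAbove_succAbove_predAbove,
      Fin.insertNth_apply_succAbove, Fin.insertNth_apply_succAbove, dStar_apply]
    simp only [Fin.succAbove_lt_succAbove_iff]

variable [Fintype X]

/-- Insertion of a new entry at the (0-indexed) position `q`, summed over all its values. -/
def insertSum {n : ℕ} (q : Fin (n + 1)) : RackChain X n →+ RackChain X (n + 1) :=
  FreeAbelianGroup.lift fun x => ∑ y : X, of (q.insertNth y x)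

theorem insertSum_of {n : ℕ} (q : Fin (n + 1)) (x : Fin n → X) :
    insertSum q (of x) = ∑ y : X, of (q.insertNth y x : Fin (n + 1) → X) :=
  lift_apply_of _ _

theorem faceDiff_insertSum_self (op : X → X → X) {n : ℕ} (q : Fin (n + 1)) (x : Fin n → X) :
    faceDiff op n q (insertSum q (of x)) =
      Fintype.card X • of x - ∑ y : X, of (actBelow op q y x) := by
  simp only [insertSum_of, map_sum, faceDiff_of, dZero_insertNth_self, dStar_insertNth_self,
    Finset.sum_sub_distrib, Finset.sum_const, Finset.card_univ]

theorem faceDiff_insertSum_succAbove {op : X → X → X}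
    (hbij : ∀ b : X, Function.Bijective fun x => op x b) {n : ℕ} (q : Fin (n + 2))
    (i : Fin (n + 1)) (c : RackChain X (n + 1)) :
    faceDiff op (n + 1) (q.succAbove i) (insertSum q c) =
      insertSum (i.predAbove q) (faceDiff op n i c) := by
  suffices h : (faceDiff op (n + 1) (q.succAbove i)).comp (insertSum q) =
      (insertSum (i.predAbove q)).comp (faceDiff op n i) from DFunLike.congr_fun h c
  ext x
  have hperm : Function.Bijective fun y => if q < q.succAbove i then op y (x i) else y := by
    split_ifs
    exacts [hbij (x i), Function.bijective_id]
  simp only [AddMonoidHom.comp_apply, insertSum_of, faceDiff_of, map_sum, map_sub,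
    dZero_insertNth_succAbove, dStar_insertNth_succAbove, Finset.sum_sub_distrib]
  rw [hperm.sum_comp fun z =>
    of ((i.predAbove q).insertNth z (dStar op n i x) : Fin (n + 1) → X)]

theorem rackBoundary_insertSum {op : X → X → X}
    (hbij : ∀ b : X, Function.Bijective fun x => op x b) {n : ℕ} (q : Fin (n + 2))
    (c : RackChain X (n + 1)) :
    rackBoundary op (n + 1) (insertSum q c) =
      (-1 : ℤ) ^ ((q : ℕ) + 1) • faceDiff op (n + 1) q (insertSum q c) +
        ∑ i : Fin (n + 1), (-1 : ℤ) ^ ((q.succAbove i : ℕ) + 1) •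
          insertSum (i.predAbove q) (faceDiff op n i c) := by
  simp only [rackBoundary_eq_sum_faceDiff, Fin.sum_univ_succAbove _ q,
    faceDiff_insertSum_succAbove hbij]

end Insertion

section Stabilizers

variable {X : Type*} {op : X → X → X}

theorem op_eq_left_symm (hidem : ∀ a : X, op a a = a)
    (htriv : ∀ a x y : X, op a x = a → op a y = a → op x y = x) {a b : X} (h : op a b = a) :
    op b a = b :=
  htriv a b a h (hidem a)

theorem op_eq_left_trans (hidem : ∀ a : X, op a a = a)
    (htriv : ∀ a x y : X, op a x = a → op a y = a → op x y = x) {a b c : X}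
    (hab : op a b = a) (hbc : op b c = b) : op a c = a :=
  htriv b a c (op_eq_left_symm hidem htriv hab) hbc

end Stabilizers

section StabilizerSums

variable {X : Type} [Fintype X] [DecidableEq X] {op : X → X → X}

theorem mem_stabF {a k : X} : k ∈ stabF op a ↔ op a k = a := by
  simp only [stabF, Finset.mem_filter_univ]

theorem sum_stabF_op (hbij : ∀ b : X, Function.Bijective fun x => op x b)
    (hdist : ∀ a b c : X, op (op a b) c = op (op a c) (op b c))
    {A : Type*} [AddCommMonoid A] (a c : X) (f : X → A) :
    ∑ k ∈ stabF op (op a c), f k = ∑ k ∈ stabF op a, f (op k c) := by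
  refine (Finset.sum_equiv (Equiv.ofBijective _ (hbij c)) (fun k => ?_) fun _ _ => rfl).symm
  rw [mem_stabF, mem_stabF, Equiv.ofBijective_apply, ← hdist]
  exact (hbij c).injective.eq_iff.symm

theorem sum_op_compl_stabF {a : X} (haa : op a a = a)
    (hsol : ∀ b : X, op a b ≠ a → ∃ x : X, op a x = b)
    {A : Type*} [AddCommMonoid A] (f : X → A) :
    ∑ y ∈ (stabF op a)ᶜ, f (op a y) = ∑ z ∈ (stabF op a)ᶜ, f z := by
  have hsub : (stabF op a)ᶜ ⊆ (stabF op a)ᶜ.image (op a) := by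
    intro z hz
    rw [Finset.mem_compl, mem_stabF] at hz
    obtain ⟨y, rfl⟩ := hsol z hz
    refine Finset.mem_image_of_mem _ ?_
    rw [Finset.mem_compl, mem_stabF]
    intro hy
    rw [hy, haa] at hz
    exact hz rfl
  have himage : (stabF op a)ᶜ.image (op a) = (stabF op a)ᶜ :=
    (Finset.eq_of_subset_of_card_le hsub Finset.card_image_le).symm
  have hinj : Set.InjOn (op a) ((stabF op a)ᶜ : Finset X) :=
    Finset.card_image_iff.1 (congrArg Finset.card himage)
  rw [← Finset.sum_image hinj, himage]

theorem sum_op_eq_card_stabF_smul_add {a : X} (haa : op a a = a)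
    (hsol : ∀ b : X, op a b ≠ a → ∃ x : X, op a x = b)
    {A : Type*} [AddCommMonoid A] (f : X → A) :
    ∑ y : X, f (op a y) = (stabF op a).card • f a + ∑ z ∈ (stabF op a)ᶜ, f z := by
  rw [← Finset.sum_add_sum_compl (stabF op a), sum_op_compl_stabF haa hsol,
    Finset.sum_congr rfl fun y hy => congrArg f (mem_stabF.1 hy), Finset.sum_const]

/-- The antisymmetrization `∑ k ∈ S_a, (f k a - f a k)` of `f` along the stabilizer of `a`; the
difference `g_1^j - g_0^j` has this form. -/
def stabAltSum (op : X → X → X) {A : Type*} [AddCommGroup A] (f : X → X → A) (a : X) : A :=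
  ∑ k ∈ stabF op a, (f k a - f a k)

theorem map_stabAltSum {A B : Type*} [AddCommGroup A] [AddCommGroup B] (φ : A →+ B)
    (f : X → X → A) (a : X) :
    φ (stabAltSum op f a) = stabAltSum op (fun u v => φ (f u v)) a := by
  simp only [stabAltSum, map_sum, map_sub]

theorem stabAltSum_sub {A : Type*} [AddCommGroup A] (f g : X → X → A) (a : X) :
    stabAltSum op (fun u v => f u v - g u v) a = stabAltSum op f a - stabAltSum op g a := by
  simp only [stabAltSum, ← Finset.sum_sub_distrib]
  exact Finset.sum_congr rfl fun k _ => sub_sub_sub_comm _ _ _ _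

theorem stabAltSum_op (hbij : ∀ b : X, Function.Bijective fun x => op x b)
    (hdist : ∀ a b c : X, op (op a b) c = op (op a c) (op b c))
    {A : Type*} [AddCommGroup A] (f : X → X → A) (a c : X) :
    stabAltSum op f (op a c) = stabAltSum op (fun u v => f (op u c) (op v c)) a :=
  sum_stabF_op hbij hdist a c fun k => f k (op a c) - f (op a c) k

theorem sum_stabAltSum_compl_stabF (hidem : ∀ a : X, op a a = a)
    (htriv : ∀ a x y : X, op a x = a → op a y = a → op x y = x)
    {A : Type*} [AddCommGroup A] (f : X → X → A) (a : X) :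
    ∑ z ∈ (stabF op a)ᶜ, stabAltSum op f z = 0 := by
  simp only [stabAltSum, Finset.sum_sub_distrib, sub_eq_zero]
  have hswap {u v : X} (hu : op a u ≠ a) (huv : op u v = u) : op a v ≠ a ∧ op v u = v :=
    have hvu : op v u = v := op_eq_left_symm hidem htriv huv
    ⟨fun hav => hu (op_eq_left_trans hidem htriv hav hvu), hvu⟩
  refine Finset.sum_comm' fun u v => ?_
  simp only [Finset.mem_compl, mem_stabF]
  exact ⟨fun ⟨hu, huv⟩ => (hswap hu huv).symm, fun ⟨hvu, hv⟩ => hswap hv hvu⟩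

theorem sum_stabAltSum_op (hidem : ∀ a : X, op a a = a)
    (hsol : ∀ a b : X, op a b ≠ a → ∃ x : X, op a x = b)
    (htriv : ∀ a x y : X, op a x = a → op a y = a → op x y = x)
    {A : Type*} [AddCommGroup A] (f : X → X → A) (a : X) :
    ∑ y : X, stabAltSum op f (op a y) = (stabF op a).card • stabAltSum op f a := by
  rw [sum_op_eq_card_stabF_smul_add (hidem a) (hsol a),
    sum_stabAltSum_compl_stabF hidem htriv, add_zero]

theorem stabAltSum_sum_op (hidem : ∀ a : X, op a a = a)
    (hbij : ∀ b : X, Function.Bijective fun x => op x b)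
    (hdist : ∀ a b c : X, op (op a b) c = op (op a c) (op b c))
    (hsol : ∀ a b : X, op a b ≠ a → ∃ x : X, op a x = b)
    (htriv : ∀ a x y : X, op a x = a → op a y = a → op x y = x)
    {A : Type*} [AddCommGroup A] (f : X → X → A) (a : X) :
    stabAltSum op (fun u v => ∑ y : X, f (op u y) (op v y)) a =
      (stabF op a).card • stabAltSum op f a :=
  calc stabAltSum op (fun u v => ∑ y : X, f (op u y) (op v y)) a
      = ∑ y : X, stabAltSum op (fun u v => f (op u y) (op v y)) a := by
        simp only [stabAltSum, ← Finset.sum_sub_distrib]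
        exact Finset.sum_comm
    _ = ∑ y : X, stabAltSum op f (op a y) := by simp only [stabAltSum_op hbij hdist]
    _ = (stabF op a).card • stabAltSum op f a := sum_stabAltSum_op hidem hsol htriv f a

end StabilizerSums

section ConstPrefix

variable {X : Type}

theorem dZero_constPrefix {n p : ℕ} {i : Fin (n + 1)} (hpi : p < i) (a b : X)
    (x : Fin (n + 1) → X) :
    dZero n i (constPrefix p a b x) = constPrefix p a b (dZero n i x) := by
  funext l
  simp only [dZero, constPrefix, Fin.val_castSucc, Fin.val_succ]
  split_ifs <;> first | rfl | omega

theorem dStar_constPrefix (op : X → X → X) {n p : ℕ} {i : Fin (n + 1)} (hpi : p < i) (a b : X)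
    (x : Fin (n + 1) → X) :
    dStar op n i (constPrefix p a b x) =
      constPrefix p (op a (x i)) (op b (x i)) (dStar op n i x) := by
  have hi : constPrefix p a b x i = x i := by
    simp only [constPrefix, if_neg hpi.not_gt, if_neg hpi.ne']
  funext l
  simp only [dStar, hi]
  simp only [dStar, constPrefix, Fin.val_castSucc, Fin.val_succ]
  split_ifs <;> first | rfl | omega

theorem faceDiff_constPrefix_eq_zero {op : X → X → X} {n p : ℕ} {i : Fin (n + 1)} (hip : i ≤ p)
    {a b : X} (haa : op a a = a) (hab : op a b = a) (x : Fin (n + 1) → X) :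
    faceDiff op n i (of (constPrefix p a b x)) = 0 := by
  refine faceDiff_of_eq_zero fun l hl => ?_
  have hlp : (l : ℕ) < p := lt_of_lt_of_le hl hip
  simp only [constPrefix, if_pos hlp]
  split_ifs
  exacts [haa, hab, by omega]

end ConstPrefix

section Homotopy

variable {X : Type} [Fintype X] [DecidableEq X]

/-- The difference `D = g_1^j - g_0^j` of the two chain maps. Like them, it is zero unless
`1 ≤ j ≤ n`. -/
def gDiff (op : X → X → X) (n j : ℕ) : RackChain X n →+ RackChain X n :=
  g1map op n j - g0map op n j

theorem gDiff_eq_zero (op : X → X → X) {n j : ℕ} (hj : ¬(1 ≤ j ∧ j ≤ n)) : gDiff op n j = 0 := by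
  simp only [gDiff, g1map, g0map, dif_neg hj, sub_self]

theorem gDiff_of (op : X → X → X) {n : ℕ} (p : Fin n) (x : Fin n → X) :
    gDiff op n (p + 1) (of x) =
      stabAltSum op (fun a b => of (constPrefix p a b x)) (x p) := by
  have hj : 1 ≤ (p : ℕ) + 1 ∧ (p : ℕ) + 1 ≤ n := by omega
  have hg1 (k : X) : constPrefix p k (x p) x = fun l : Fin n => if (l : ℕ) < p then k else x l := by
    funext l
    unfold constPrefix
    split_ifs with _ hl
    exacts [rfl, congrArg x (Fin.ext hl.symm), rfl]
  simp only [stabAltSum, Finset.sum_sub_distrib, hg1]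
  simp only [gDiff, g1map, g0map, AddMonoidHom.sub_apply, lift_apply_of, dif_pos hj]
  rfl

theorem Gmap_eq_zero (op : X → X → X) {n j : ℕ} (hj : ¬(1 ≤ j ∧ j ≤ n)) : Gmap op n j = 0 := by
  ext x
  rw [Gmap, lift_apply_of, dif_neg hj, AddMonoidHom.zero_apply]

theorem Gmap_eq_insertSum_gDiff (op : X → X → X) {n : ℕ} (q : Fin (n + 1)) (c : RackChain X n) :
    Gmap op n q c = insertSum q (gDiff op n q c) := by
  suffices h : Gmap op n q = (insertSum q).comp (gDiff op n q) from DFunLike.congr_fun h c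
  by_cases hj : 1 ≤ (q : ℕ) ∧ (q : ℕ) ≤ n
  · obtain ⟨p, rfl⟩ : ∃ p : Fin n, p.succ = q :=
      ⟨⟨q - 1, by omega⟩, Fin.ext (Nat.sub_add_cancel hj.1)⟩
    ext x
    rw [AddMonoidHom.comp_apply, Fin.val_succ, gDiff_of, map_stabAltSum]
    simp only [insertSum_of, stabAltSum, ← Finset.sum_sub_distrib, insertNth_constPrefix]
    rw [Gmap, lift_apply_of, dif_pos (by omega)]
    rfl
  · rw [Gmap_eq_zero op hj, gDiff_eq_zero op hj, AddMonoidHom.comp_zero]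

theorem gDiff_congr (op : X → X → X) {n j : ℕ} {x x' : Fin n → X}
    (h : ∀ l : Fin n, j ≤ l + 1 → x l = x' l) :
    gDiff op n j (of x) = gDiff op n j (of x') := by
  by_cases hj : 1 ≤ j ∧ j ≤ n
  · obtain ⟨p, rfl⟩ : ∃ p : Fin n, (p : ℕ) + 1 = j :=
      ⟨⟨j - 1, by omega⟩, Nat.sub_add_cancel hj.1⟩
    have htuple (a b : X) : constPrefix p a b x = constPrefix p a b x' :=
      constPrefix_congr a b fun l hl => h l (by omega)
    simp only [gDiff_of, htuple, h p le_rfl]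
  · simp only [gDiff_eq_zero op hj, AddMonoidHom.zero_apply]

theorem gDiff_faceDiff_eq_zero (op : X → X → X) {n j : ℕ} {i : Fin (n + 1)} (hij : (i : ℕ) < j)
    (c : RackChain X (n + 1)) : gDiff op n j (faceDiff op n i c) = 0 := by
  suffices h : (gDiff op n j).comp (faceDiff op n i) = 0 from DFunLike.congr_fun h c
  ext x
  rw [AddMonoidHom.comp_apply, faceDiff_of, map_sub, AddMonoidHom.zero_apply, sub_eq_zero]
  refine gDiff_congr op fun l hl => ?_
  have hil : ¬(l : ℕ) < i := by omega
  simp only [dZero, dStar, if_neg hil]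

theorem faceDiff_gDiff_eq_zero {op : X → X → X} (hidem : ∀ a : X, op a a = a)
    (htriv : ∀ a x y : X, op a x = a → op a y = a → op x y = x) {n j : ℕ} {i : Fin (n + 1)}
    (hij : (i : ℕ) < j) (c : RackChain X (n + 1)) :
    faceDiff op n i (gDiff op (n + 1) j c) = 0 := by
  suffices h : (faceDiff op n i).comp (gDiff op (n + 1) j) = 0 from DFunLike.congr_fun h c
  by_cases hj : 1 ≤ j ∧ j ≤ n + 1
  · obtain ⟨p, rfl⟩ : ∃ p : Fin (n + 1), (p : ℕ) + 1 = j :=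
      ⟨⟨j - 1, by omega⟩, Nat.sub_add_cancel hj.1⟩
    ext x
    have hip : (i : ℕ) ≤ p := Nat.lt_succ_iff.1 hij
    rw [AddMonoidHom.comp_apply, gDiff_of, map_stabAltSum]
    refine Finset.sum_eq_zero fun k hk => ?_
    have hak : op (x p) k = x p := mem_stabF.1 hk
    have hka : op k (x p) = k := op_eq_left_symm hidem htriv hak
    simp only [faceDiff_constPrefix_eq_zero hip (hidem _) hka,
      faceDiff_constPrefix_eq_zero hip (hidem _) hak, sub_self]
  · rw [gDiff_eq_zero op hj, AddMonoidHom.comp_zero]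

theorem gDiff_faceDiff {op : X → X → X} (hbij : ∀ b : X, Function.Bijective fun x => op x b)
    (hdist : ∀ a b c : X, op (op a b) c = op (op a c) (op b c)) {n j : ℕ} {i : Fin (n + 1)}
    (hji : j ≤ i) (c : RackChain X (n + 1)) :
    gDiff op n j (faceDiff op n i c) = faceDiff op n i (gDiff op (n + 1) j c) := by
  suffices h : (gDiff op n j).comp (faceDiff op n i) =
      (faceDiff op n i).comp (gDiff op (n + 1) j) from DFunLike.congr_fun h c
  rcases Nat.eq_zero_or_pos j with rfl | hj
  · have hzero (k : ℕ) : gDiff op k 0 = 0 := gDiff_eq_zero op fun h => absurd h.1 (by decide)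
    rw [hzero, hzero, AddMonoidHom.zero_comp, AddMonoidHom.comp_zero]
  obtain ⟨p, rfl⟩ : ∃ p : Fin n, (p : ℕ) + 1 = j := ⟨⟨j - 1, by omega⟩, Nat.sub_add_cancel hj⟩
  ext x
  have hpi : (p : ℕ) < i := hji
  have hZero : dZero n i x p = x p.castSucc := if_pos hpi
  have hStar : dStar op n i x p = op (x p.castSucc) (x i) := if_pos hpi
  have hgDiff : gDiff op (n + 1) (p + 1) (of x) =
      stabAltSum op (fun a b => of (constPrefix p a b x)) (x p.castSucc) :=
    gDiff_of op p.castSucc x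
  simp only [AddMonoidHom.comp_apply, faceDiff_of, map_sub, gDiff_of, hgDiff, map_stabAltSum,
    dZero_constPrefix hpi, dStar_constPrefix op hpi, stabAltSum_sub, hZero, hStar,
    stabAltSum_op hbij hdist]

theorem faceDiff_insertSum_gDiff {op : X → X → X} {m : ℕ} (hidem : ∀ a : X, op a a = a)
    (hbij : ∀ b : X, Function.Bijective fun x => op x b)
    (hdist : ∀ a b c : X, op (op a b) c = op (op a c) (op b c))
    (hstab : ∀ a : X, (stabF op a).card = m)
    (hsol : ∀ a b : X, op a b ≠ a → ∃ x : X, op a x = b)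
    (htriv : ∀ a x y : X, op a x = a → op a y = a → op x y = x) {n : ℕ} (p : Fin n)
    (c : RackChain X n) :
    faceDiff op n p.succ (insertSum p.succ (gDiff op n (p + 1) c)) =
      ((Fintype.card X : ℤ) - m) • gDiff op n (p + 1) c := by
  suffices h : ((faceDiff op n p.succ).comp (insertSum p.succ)).comp (gDiff op n (p + 1)) =
      ((Fintype.card X : ℤ) - m) • gDiff op n (p + 1) from DFunLike.congr_fun h c
  ext x
  let f : X → X → RackChain X n := fun a b => of (constPrefix p a b x)
  have hface (a b : X) : faceDiff op n p.succ (insertSum p.succ (f a b)) =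
      Fintype.card X • f a b - ∑ y : X, f (op a y) (op b y) := by
    simp only [f, faceDiff_insertSum_self, Fin.val_succ, actBelow_constPrefix]
  calc faceDiff op n p.succ (insertSum p.succ (gDiff op n (p + 1) (of x)))
      = stabAltSum op (fun a b => Fintype.card X • f a b - ∑ y : X, f (op a y) (op b y)) (x p) := by
        simp only [gDiff_of, map_stabAltSum, ← hface, f]
    _ = Fintype.card X • stabAltSum op f (x p) - m • stabAltSum op f (x p) := by
        rw [stabAltSum_sub, stabAltSum_sum_op hidem hbij hdist hsol htriv, hstab]
        exact congrArg (· - _) (map_stabAltSum (nsmulAddMonoidHom (Fintype.card X)) f (x p)).symm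
    _ = ((Fintype.card X : ℤ) - m) • gDiff op n (p + 1) (of x) := by
        rw [gDiff_of, sub_smul, natCast_zsmul, natCast_zsmul]

theorem Gmap_faceDiff_eq_zero (op : X → X → X) {n j : ℕ} {i : Fin (n + 1)} (hij : (i : ℕ) < j)
    (c : RackChain X (n + 1)) : Gmap op n j (faceDiff op n i c) = 0 := by
  by_cases hj : 1 ≤ j ∧ j ≤ n
  · have hG := Gmap_eq_insertSum_gDiff op ⟨j, Nat.lt_succ_of_le hj.2⟩ (faceDiff op n i c)
    rw [hG, gDiff_faceDiff_eq_zero op hij, map_zero]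
  · rw [Gmap_eq_zero op hj, AddMonoidHom.zero_apply]

theorem Gmap_faceDiff {op : X → X → X} (hbij : ∀ b : X, Function.Bijective fun x => op x b)
    (hdist : ∀ a b c : X, op (op a b) c = op (op a c) (op b c)) {n : ℕ} {q : Fin (n + 2)}
    {i : Fin (n + 1)} (hqi : (q : ℕ) ≤ i) (c : RackChain X (n + 1)) :
    Gmap op n q (faceDiff op n i c) =
      insertSum (i.predAbove q) (faceDiff op n i (gDiff op (n + 1) q c)) := by
  have hval : (i.predAbove q : ℕ) = q := by
    rw [Fin.predAbove_of_le_castSucc i q hqi, Fin.coe_castPred]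
  rw [← gDiff_faceDiff hbij hdist hqi, ← hval, ← Gmap_eq_insertSum_gDiff]

theorem Gmap_rackBoundary {op : X → X → X} (hidem : ∀ a : X, op a a = a)
    (hbij : ∀ b : X, Function.Bijective fun x => op x b)
    (hdist : ∀ a b c : X, op (op a b) c = op (op a c) (op b c))
    (htriv : ∀ a x y : X, op a x = a → op a y = a → op x y = x) {n : ℕ} (q : Fin (n + 2))
    (c : RackChain X (n + 1)) :
    Gmap op n q (rackBoundary op n c) =
      -∑ i : Fin (n + 1), (-1 : ℤ) ^ ((q.succAbove i : ℕ) + 1) •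
        insertSum (i.predAbove q) (faceDiff op n i (gDiff op (n + 1) q c)) := by
  rw [rackBoundary_eq_sum_faceDiff, map_sum, ← Finset.sum_neg_distrib]
  refine Finset.sum_congr rfl fun i _ => ?_
  rw [map_zsmul]
  rcases lt_or_ge (i : ℕ) q with hiq | hqi
  · rw [Gmap_faceDiff_eq_zero op hiq, faceDiff_gDiff_eq_zero hidem htriv hiq, map_zero, smul_zero,
      smul_zero, neg_zero]
  · rw [Gmap_faceDiff hbij hdist hqi, Fin.succAbove_of_le_castSucc q i hqi, Fin.val_succ,
      pow_succ _ ((i : ℕ) + 1), mul_neg_one, neg_smul, neg_neg]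

end Homotopy

/-- For a finite `m`-almost quasigroup quandle `X` with all
stabilizers trivial subquandles,
`∂_{n+1}∘G_n^j + G_{n-1}^j∘∂_n = (−1)^{j+1}(|X|−m)(g_1^j − g_0^j)`
as maps `C_n^R(X) → C_n^R(X)` (for `1 ≤ j ≤ n`). -/
theorem mAQ_Gmap_homotopy
    {X : Type} [Fintype X] [DecidableEq X] (op : X → X → X) (m : ℕ)
    (hm : 1 ≤ m)
    (hidem : ∀ a : X, op a a = a)
    (hbij : ∀ b : X, Function.Bijective fun x => op x b)
    (hdist : ∀ a b c : X, op (op a b) c = op (op a c) (op b c))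
    (hstab : ∀ a : X, (stabF op a).card = m)
    (hsol : ∀ a b : X, op a b ≠ a → ∃! x : X, op a x = b)
    (htriv : ∀ a x y : X, op a x = a → op a y = a → op x y = x) :
    ∀ (n j : ℕ), 1 ≤ j → j ≤ n + 1 →
      ∀ c : RackChain X (n + 1),
        rackBoundary op (n + 1) (Gmap op (n + 1) j c)
            + Gmap op n j (rackBoundary op n c)
          = ((-1 : ℤ) ^ (j + 1) * ((Fintype.card X : ℤ) - (m : ℤ))) •
              (g1map op (n + 1) j c - g0map op (n + 1) j c) := by
  intro n j hj₁ hj₂ c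
  obtain ⟨p, rfl⟩ : ∃ p : Fin (n + 1), (p.succ : ℕ) = j :=
    ⟨⟨j - 1, by omega⟩, Nat.sub_add_cancel hj₁⟩
  let D := gDiff op (n + 1) p.succ c
  have hface : faceDiff op (n + 1) p.succ (insertSum p.succ D) =
      ((Fintype.card X : ℤ) - m) • D :=
    faceDiff_insertSum_gDiff hidem hbij hdist hstab (fun a b h => (hsol a b h).exists) htriv p c
  calc rackBoundary op (n + 1) (Gmap op (n + 1) p.succ c) + Gmap op n p.succ (rackBoundary op n c)
      = (-1 : ℤ) ^ ((p.succ : ℕ) + 1) • faceDiff op (n + 1) p.succ (insertSum p.succ D) := by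
        rw [Gmap_eq_insertSum_gDiff, rackBoundary_insertSum hbij,
          Gmap_rackBoundary hidem hbij hdist htriv, add_neg_cancel_right]
    _ = ((-1 : ℤ) ^ ((p.succ : ℕ) + 1) * ((Fintype.card X : ℤ) - m)) • D := by
        rw [hface, smul_smul]
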